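/- arXiv:2007.11287 — 6 statements merged into one kernel-verified Lean document; each statement's English description precedes it below -/
import Mathlib

section
/- The SCA weight admits a product formula: for every spin configuration σ ∈ Ω and every β ≥ 0, w(σ) := Σ_{τ∈Ω} e^{−β H̃(σ,τ)} = Π_{x∈V} 2 e^{(β/2) h_x σ_x} cosh((β/2)(h̃_x(σ) + q_x σ_x)). -/
open Real Finset

/-- Spin configurations: `Ω = {-1,+1}^V`. -/
abbrev Conf (V : Type*) := V → ({-1, 1} : Finset ℝ)

instance {V : Type*} : Nonempty (Conf V) := ⟨fun _ => ⟨1, by simp⟩⟩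

/-- Flip a single spin value. -/
noncomputable def spinFlip (s : ({-1, 1} : Finset ℝ)) : ({-1, 1} : Finset ℝ) :=
  ⟨-(s : ℝ), by
    have hs := s.2
    simp only [Finset.mem_insert, Finset.mem_singleton] at hs ⊢
    rcases hs with h | h <;> simp [h]⟩

/-- `σ^x`: the configuration `σ` with the spin at `x` flipped. -/
noncomputable def confFlip {V : Type*} [DecidableEq V] (σ : Conf V) (x : V) : Conf V :=
  Function.update σ x (spinFlip (σ x))

/-- `D_{σ,τ}`: the set of vertices at which `σ` and `τ` disagree. -/
noncomputable def Dset {V : Type*} [Fintype V] (σ τ : Conf V) : Finset V :=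
  Finset.univ.filter fun x => (σ x : ℝ) ≠ (τ x : ℝ)

/-- The cavity field `h̃_x(σ) = Σ_y J_{x,y} σ_y + h_x`. -/
noncomputable def cavity {V : Type*} [Fintype V] (J : V → V → ℝ) (h : V → ℝ)
    (σ : Conf V) (x : V) : ℝ :=
  (∑ y, J x y * (σ y : ℝ)) + h x

/-- The extended Hamiltonian `H̃(σ,τ)`. -/
noncomputable def Htilde {V : Type*} [Fintype V] (J : V → V → ℝ) (h q : V → ℝ)
    (σ τ : Conf V) : ℝ :=
  -(1/2) * ∑ x, ∑ y, J x y * (σ x : ℝ) * (τ y : ℝ)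
    - (1/2) * ∑ x, h x * ((σ x : ℝ) + (τ x : ℝ))
    - (1/2) * ∑ x, q x * (σ x : ℝ) * (τ x : ℝ)

/-- The Ising Hamiltonian `H(σ)`. -/
noncomputable def Hamil {V : Type*} [Fintype V] (J : V → V → ℝ) (h : V → ℝ)
    (σ : Conf V) : ℝ :=
  -(1/2) * ∑ x, ∑ y, J x y * (σ x : ℝ) * (σ y : ℝ) - ∑ x, h x * (σ x : ℝ)

/-- The SCA weight `w(σ) = Σ_τ e^{-β H̃(σ,τ)}`. -/
noncomputable def wSCA {V : Type*} [Fintype V] [DecidableEq V] (J : V → V → ℝ)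
    (h q : V → ℝ) (β : ℝ) (σ : Conf V) : ℝ :=
  ∑ τ : Conf V, Real.exp (-β * Htilde J h q σ τ)

/-- The SCA transition probability `P^SCA_{β,q}(σ,τ)`. -/
noncomputable def PSCA {V : Type*} [Fintype V] [DecidableEq V] (J : V → V → ℝ)
    (h q : V → ℝ) (β : ℝ) (σ τ : Conf V) : ℝ :=
  Real.exp (-β * Htilde J h q σ τ) / wSCA J h q β σ

/-- The SCA equilibrium distribution `π^SCA_{β,q}`. -/
noncomputable def piSCA {V : Type*} [Fintype V] [DecidableEq V] (J : V → V → ℝ)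
    (h q : V → ℝ) (β : ℝ) (σ : Conf V) : ℝ :=
  wSCA J h q β σ / ∑ τ : Conf V, wSCA J h q β τ

/-- Total-variation distance between two measures on `Ω`. -/
noncomputable def tvDist {V : Type*} [Fintype V] [DecidableEq V]
    (μ ν : Conf V → ℝ) : ℝ :=
  (1/2) * ∑ σ : Conf V, |μ σ - ν σ|

/-!
For fixed `σ`, the extended Hamiltonian is affine in `τ`: exchanging the two sums in the interaction
term collects the field `∑ y, J y x * σ y` that `σ` exerts on `τ x`, which belongs to the cavity
field of the transposed couplings. The Boltzmann factor is thus that of noninteracting spins, so the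
sum over `τ` factorizes over the vertices, and each vertex contributes a single-spin sum, a
hyperbolic cosine.
-/

theorem sum_spin_exp_mul (b : ℝ) :
    ∑ s : ({-1, 1} : Finset ℝ), exp (b * (s : ℝ)) = 2 * cosh b := by
  rw [sum_coe_sort ({-1, 1} : Finset ℝ) (fun s ↦ exp (b * s)), sum_pair (by norm_num), cosh_eq,
    mul_neg_one, mul_one]
  ring

theorem sum_conf_exp_sum_add_mul {V : Type*} [Fintype V] [DecidableEq V] (a b : V → ℝ) :
    ∑ τ : Conf V, exp (∑ x, (a x + b x * (τ x : ℝ))) = ∏ x, 2 * exp (a x) * cosh (b x) := by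
  calc
    ∑ τ : Conf V, exp (∑ x, (a x + b x * (τ x : ℝ)))
      = ∏ x, ∑ s : ({-1, 1} : Finset ℝ), exp (a x + b x * (s : ℝ)) := by
        simp only [exp_sum, Fintype.prod_sum]
    _ = ∏ x, 2 * exp (a x) * cosh (b x) := by
        simp only [exp_add, ← mul_sum, sum_spin_exp_mul, mul_assoc, mul_left_comm]

theorem Htilde_eq_neg_half_mul_sum {V : Type*} [Fintype V] (J : V → V → ℝ) (h q : V → ℝ)
    (σ τ : Conf V) :
    Htilde J h q σ τ = -(1 / 2) * ∑ x, (h x * (σ x : ℝ)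
      + (cavity (fun x y ↦ J y x) h σ x + q x * (σ x : ℝ)) * (τ x : ℝ)) := by
  have interaction : ∑ x, ∑ y, J x y * (σ x : ℝ) * (τ y : ℝ)
      = ∑ x, (∑ y, J y x * (σ y : ℝ)) * (τ x : ℝ) := by
    simp only [sum_mul]
    exact sum_comm
  simp only [Htilde, cavity, interaction, add_mul, mul_add, sum_add_distrib]
  ring

theorem sca_weight_product_formula_general {V : Type*} [Fintype V] [DecidableEq V]
    (J : V → V → ℝ) (h q : V → ℝ) (β : ℝ) (σ : Conf V) :
    wSCA J h q β σ
      = ∏ x, 2 * exp (β / 2 * h x * (σ x : ℝ))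
          * cosh (β / 2 * (cavity (fun x y ↦ J y x) h σ x + q x * (σ x : ℝ))) := by
  have exponent (τ : Conf V) : -β * Htilde J h q σ τ = ∑ x, (β / 2 * h x * (σ x : ℝ)
      + β / 2 * (cavity (fun x y ↦ J y x) h σ x + q x * (σ x : ℝ)) * (τ x : ℝ)) := by
    rw [Htilde_eq_neg_half_mul_sum, ← mul_assoc, mul_sum]
    exact sum_congr rfl fun x _ ↦ by ring
  simp only [wSCA, exponent, sum_conf_exp_sum_add_mul]

/-- product formula for the SCA weight. -/
theorem sca_weight_product_formula {V : Type*} [Fintype V] [DecidableEq V]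
    (J : V → V → ℝ) (hJsym : ∀ x y, J x y = J y x) (hJdiag : ∀ x, J x x = 0)
    (h q : V → ℝ) (hq : ∀ x, 0 ≤ q x) (β : ℝ) (hβ : 0 ≤ β) (σ : Conf V) :
    wSCA J h q β σ
      = ∏ x, 2 * Real.exp (β / 2 * h x * (σ x : ℝ))
          * Real.cosh (β / 2 * (cavity J h σ x + q x * (σ x : ℝ))) := by
  have transpose_eq : (fun x y ↦ J y x) = J := funext₂ fun x y ↦ hJsym y x
  simpa only [transpose_eq] using sca_weight_product_formula_general J h q β σ
end

section
/- For all real numbers a and b, |tanh(a+b) − tanh(a−b)| ≤ 2 tanh|b|. -/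
/-!
The difference `tanh (a + b) - tanh (a - b)` equals `sinh (2b) / (cosh (a + b) cosh (a - b))`, and
the denominator `cosh² b + sinh² a` is positive and smallest at `a = 0`, where the difference is
`2 tanh b`.
-/

theorem tanh_sub_tanh (x y : ℝ) :
    Real.tanh x - Real.tanh y = Real.sinh (x - y) / (Real.cosh x * Real.cosh y) := by
  rw [Real.tanh_eq_sinh_div_cosh, Real.tanh_eq_sinh_div_cosh,
    div_sub_div _ _ (Real.cosh_pos x).ne' (Real.cosh_pos y).ne', Real.sinh_sub]

theorem abs_tanh_sub_tanh (x y : ℝ) :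
    |Real.tanh x - Real.tanh y| = Real.sinh |x - y| / (Real.cosh x * Real.cosh y) := by
  rw [tanh_sub_tanh, abs_div, Real.abs_sinh,
    abs_of_pos (mul_pos (Real.cosh_pos x) (Real.cosh_pos y))]

theorem two_mul_tanh (x : ℝ) : 2 * Real.tanh x = Real.sinh (2 * x) / Real.cosh x ^ 2 := by
  have hx := (Real.cosh_pos x).ne'
  rw [Real.tanh_eq_sinh_div_cosh, Real.sinh_two_mul]
  field_simp

theorem cosh_add_mul_cosh_sub (a b : ℝ) :
    Real.cosh (a + b) * Real.cosh (a - b) = Real.cosh b ^ 2 + Real.sinh a ^ 2 := by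
  rw [Real.cosh_add, Real.cosh_sub]
  linear_combination Real.cosh b ^ 2 * Real.cosh_sq a - Real.sinh a ^ 2 * Real.sinh_sq b

theorem cosh_sq_le_cosh_add_mul_cosh_sub (a b : ℝ) :
    Real.cosh b ^ 2 ≤ Real.cosh (a + b) * Real.cosh (a - b) := by
  rw [cosh_add_mul_cosh_sub]
  exact le_add_of_nonneg_right (sq_nonneg _)

/-- for all real `a`, `b`, `|tanh(a+b) − tanh(a−b)| ≤ 2 tanh |b|`. -/
theorem abs_tanh_add_sub_tanh_sub_le (a b : ℝ) :
    |Real.tanh (a + b) - Real.tanh (a - b)| ≤ 2 * Real.tanh |b| := by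
  have abs_sub_eq : |(a + b) - (a - b)| = 2 * |b| := by
    rw [add_sub_sub_cancel, ← two_mul, abs_mul, abs_two]
  have sinh_nonneg : 0 ≤ Real.sinh (2 * |b|) := Real.sinh_nonneg_iff.mpr (by positivity)
  calc |Real.tanh (a + b) - Real.tanh (a - b)|
      = Real.sinh (2 * |b|) / (Real.cosh (a + b) * Real.cosh (a - b)) := by
        rw [abs_tanh_sub_tanh, abs_sub_eq]
    _ ≤ Real.sinh (2 * |b|) / Real.cosh b ^ 2 :=
        div_le_div_of_nonneg_left sinh_nonneg (pow_pos (Real.cosh_pos b) 2)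
          (cosh_sq_le_cosh_add_mul_cosh_sub a b)
    _ = 2 * Real.tanh |b| := by rw [two_mul_tanh, Real.cosh_abs]
end

section
/- (Theorem 2.1, contraction estimate) For any nonnegative pinning parameters q, if β is small enough that r := max_{x∈V} ( tanh(βq_x/2) + Σ_{y∈V} tanh(β|J_{x,y}|/2) ) < 1, then for all σ, τ ∈ Ω the transportation metric between one-step SCA distributions satisfies ρ_TM(P^SCA_{β,q}(σ,·), P^SCA_{β,q}(τ,·)) ≤ r·|D_{σ,τ}|, where D_{σ,τ} = {x ∈ V : σ_x ≠ τ_x}. -/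
open Real Finset

/-- The transportation metric `ρ_TM(μ,ν)`: the infimum over couplings `γ` of
the expected size of the disagreement set. -/
noncomputable def rhoTM {V : Type*} [Fintype V] [DecidableEq V]
    (μ ν : Conf V → ℝ) : ℝ :=
  sInf { e : ℝ | ∃ γ : Conf V × Conf V → ℝ, (∀ p, 0 ≤ γ p) ∧
      (∀ σ, ∑ τ : Conf V, γ (σ, τ) = μ σ) ∧
      (∀ τ, ∑ σ : Conf V, γ (σ, τ) = ν τ) ∧
      e = ∑ p : Conf V × Conf V, γ p * ((Dset p.1 p.2).card : ℝ) }

/-!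
`H̃(σ, ·)` is affine in the new configuration, so one step of the SCA refreshes all spins
independently: `P(σ, ·)` is a product over `x` of two-point laws with mean `tanh (a_x(σ))`.
Coupling the factors maximally and independently of one another bounds `ρ_TM` by
`∑ x |tanh a_x(σ) - tanh a_x(τ)| / 2`. Each summand is at most `tanh (|a_x(σ) - a_x(τ)| / 2)`, and
subadditivity of `tanh` on `[0, ∞)` splits this into one contribution per disagreeing vertex.
Summing over `x` first, the contribution of a disagreeing vertex `y` is
`tanh (β q_y / 2) + ∑ x tanh (β |J_{y,x}| / 2) ≤ r`.
-/

section Tanh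

theorem tanh_sub_tanh_s5 (a b : ℝ) : tanh a - tanh b = sinh (a - b) / (cosh a * cosh b) := by
  rw [tanh_eq_sinh_div_cosh, tanh_eq_sinh_div_cosh, sinh_sub,
    div_sub_div _ _ (cosh_pos a).ne' (cosh_pos b).ne']

theorem tanh_add_tanh (a b : ℝ) : tanh a + tanh b = sinh (a + b) / (cosh a * cosh b) := by
  simpa using tanh_sub_tanh_s5 a (-b)

theorem tanh_strictMono : StrictMono tanh := fun a b hab => by
  rw [← sub_pos, tanh_sub_tanh_s5]
  exact div_pos (sinh_pos_iff.2 (sub_pos.2 hab)) (mul_pos (cosh_pos b) (cosh_pos a))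

theorem tanh_add_le {a b : ℝ} (ha : 0 ≤ a) (hb : 0 ≤ b) :
    tanh (a + b) ≤ tanh a + tanh b := by
  rw [tanh_add_tanh, tanh_eq_sinh_div_cosh]
  have hcosh : cosh a * cosh b ≤ cosh (a + b) := by
    rw [cosh_add]
    exact le_add_of_nonneg_right (mul_nonneg (sinh_nonneg_iff.2 ha) (sinh_nonneg_iff.2 hb))
  exact div_le_div_of_nonneg_left (sinh_nonneg_iff.2 (add_nonneg ha hb))
    (mul_pos (cosh_pos a) (cosh_pos b)) hcosh

theorem tanh_abs_add_le (a b : ℝ) : tanh |a + b| ≤ tanh |a| + tanh |b| :=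
  (tanh_strictMono.monotone (abs_add_le a b)).trans (tanh_add_le (abs_nonneg a) (abs_nonneg b))

theorem tanh_abs_sum_le {ι : Type*} (s : Finset ι) (f : ι → ℝ) :
    tanh |∑ i ∈ s, f i| ≤ ∑ i ∈ s, tanh |f i| :=
  le_sum_of_subadditive (fun x => tanh |x|) (by simp) tanh_abs_add_le s f

theorem cosh_half_sub_sq_le (a b : ℝ) : cosh ((a - b) / 2) ^ 2 ≤ cosh a * cosh b := by
  have hsq : 2 * cosh ((a - b) / 2) ^ 2 = 1 + cosh (a - b) := by
    have hdouble := cosh_two_mul ((a - b) / 2)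
    rw [mul_div_cancel₀ _ two_ne_zero, sinh_sq] at hdouble
    linarith
  have hprod : 2 * (cosh a * cosh b) = cosh (a + b) + cosh (a - b) := by
    rw [cosh_add, cosh_sub]
    ring
  linarith [one_le_cosh (a + b)]

theorem abs_tanh_sub_tanh_le (a b : ℝ) : |tanh a - tanh b| ≤ 2 * tanh (|a - b| / 2) := by
  set d := |a - b|
  have hcosh : cosh (d / 2) ^ 2 ≤ cosh a * cosh b := by
    have habs : cosh (d / 2) = cosh ((a - b) / 2) := by
      rw [← cosh_abs ((a - b) / 2), abs_div, abs_two]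
    exact habs ▸ cosh_half_sub_sq_le a b
  have hdouble : sinh d = 2 * sinh (d / 2) * cosh (d / 2) := by
    rw [← sinh_two_mul, mul_div_cancel₀ _ two_ne_zero]
  calc |tanh a - tanh b|
      = sinh d / (cosh a * cosh b) := by
        rw [tanh_sub_tanh_s5, abs_div, abs_sinh, abs_of_pos (mul_pos (cosh_pos a) (cosh_pos b))]
    _ ≤ sinh d / cosh (d / 2) ^ 2 :=
        div_le_div_of_nonneg_left (sinh_nonneg_iff.2 (abs_nonneg _)) (by positivity) hcosh
    _ = 2 * tanh (d / 2) := by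
        rw [hdouble, tanh_eq_sinh_div_cosh]
        field_simp

end Tanh

theorem sum_prod_mul_apply {ι R : Type*} {κ : ι → Type*} [Fintype ι] [DecidableEq ι]
    [∀ i, Fintype (κ i)] [CommSemiring R] (p : ∀ i, κ i → R) (i : ι)
    (hp : ∀ j ≠ i, ∑ s, p j s = 1) (f : κ i → R) :
    ∑ x : ∀ j, κ j, (∏ j, p j (x j)) * f (x i) = ∑ s, p i s * f s := by
  let p' : ∀ j, κ j → R := Function.update p i fun s => p i s * f s
  have hsame : p' i = fun s => p i s * f s := Function.update_self ..
  have hother : ∀ j ≠ i, p' j = p j := fun j hj => Function.update_of_ne hj ..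
  have habsorb (x : ∀ j, κ j) : (∏ j, p j (x j)) * f (x i) = ∏ j, p' j (x j) := by
    rw [Fintype.prod_eq_mul_prod_compl i, Fintype.prod_eq_mul_prod_compl i fun j => p' j (x j),
      hsame, mul_right_comm]
    congr 1
    exact prod_congr rfl fun j hj => by rw [hother j (by simpa using hj)]
  simp_rw [habsorb]
  rw [← Fintype.prod_sum, Fintype.prod_eq_single i fun j hj => by rw [hother j hj, hp j hj], hsame]

/-- `γ` is a coupling of the finite measures with point masses `μ` and `ν`: a nonnegative weight on
pairs with marginals `μ` and `ν`. No total mass is prescribed. -/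
structure IsCoupling {α β : Type*} [Fintype α] [Fintype β] (γ : α × β → ℝ) (μ : α → ℝ)
    (ν : β → ℝ) : Prop where
  nonneg : ∀ w, 0 ≤ γ w
  sum_right : ∀ a, ∑ b, γ (a, b) = μ a
  sum_left : ∀ b, ∑ a, γ (a, b) = ν b

namespace IsCoupling

theorem sum_eq {α β : Type*} [Fintype α] [Fintype β] {γ : α × β → ℝ} {μ : α → ℝ} {ν : β → ℝ}
    (hγ : IsCoupling γ μ ν) : ∑ w, γ w = ∑ a, μ a := by
  simp only [Fintype.sum_prod_type, hγ.sum_right]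

theorem pi {ι : Type*} {α β : ι → Type*} [Fintype ι] [DecidableEq ι] [∀ i, Fintype (α i)]
    [∀ i, Fintype (β i)] {γ : ∀ i, α i × β i → ℝ} {μ : ∀ i, α i → ℝ} {ν : ∀ i, β i → ℝ}
    (hγ : ∀ i, IsCoupling (γ i) (μ i) (ν i)) :
    IsCoupling (fun w : (∀ i, α i) × (∀ i, β i) => ∏ i, γ i (w.1 i, w.2 i))
      (fun a => ∏ i, μ i (a i)) (fun b => ∏ i, ν i (b i)) where
  nonneg w := prod_nonneg fun i _ => (hγ i).nonneg _
  sum_right a := by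
    rw [← Fintype.prod_sum fun i b => γ i (a i, b)]
    simp only [(hγ _).sum_right]
  sum_left b := by
    rw [← Fintype.prod_sum fun i a => γ i (a, b i)]
    simp only [(hγ _).sum_left]

end IsCoupling

section MaximalCoupling

variable {α : Type*} [Fintype α]

theorem sum_posPart_sub_eq_sum_negPart_sub {μ ν : α → ℝ} (hμν : ∑ a, μ a = ∑ a, ν a) :
    ∑ a, (μ a - ν a)⁺ = ∑ a, (μ a - ν a)⁻ := by
  rw [← sub_eq_zero, ← sum_sub_distrib]
  simp only [posPart_sub_negPart, sum_sub_distrib, hμν, sub_self]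

theorem mul_sum_div_sum_of_nonneg {f : α → ℝ} (hf : ∀ a, 0 ≤ f a) (a : α) :
    f a * (∑ b, f b) / ∑ b, f b = f a :=
  mul_div_cancel_of_imp fun hsum =>
    (sum_eq_zero_iff_of_nonneg fun b _ => hf b).1 hsum a (mem_univ a)

/-- The maximal coupling of two finite measures of equal mass: the common part `min μ ν` is kept on
the diagonal and the excesses `(μ - ν)⁺` and `(μ - ν)⁻` are coupled independently. When `μ = ν` the
normalizing sum vanishes, and division by zero correctly drops the second term. -/
noncomputable def maximalCoupling [DecidableEq α] (μ ν : α → ℝ) (w : α × α) : ℝ :=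
  (if w.1 = w.2 then min (μ w.1) (ν w.1) else 0)
    + (μ w.1 - ν w.1)⁺ * (μ w.2 - ν w.2)⁻ / ∑ a, (μ a - ν a)⁺

variable [DecidableEq α] {μ ν : α → ℝ}

theorem isCoupling_maximalCoupling (hμ : ∀ a, 0 ≤ μ a) (hν : ∀ a, 0 ≤ ν a)
    (hμν : ∑ a, μ a = ∑ a, ν a) : IsCoupling (maximalCoupling μ ν) μ ν where
  nonneg w := by
    refine add_nonneg ?_ (div_nonneg (mul_nonneg (posPart_nonneg _) (negPart_nonneg _))
      (sum_nonneg fun _ _ => posPart_nonneg _))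
    split_ifs
    exacts [le_min (hμ _) (hν _), le_rfl]
  sum_right a := by
    simp only [maximalCoupling, sum_add_distrib, sum_ite_eq, mem_univ, if_true]
    rw [← sum_div, ← mul_sum, ← sum_posPart_sub_eq_sum_negPart_sub hμν,
      mul_sum_div_sum_of_nonneg fun a => posPart_nonneg (μ a - ν a), inf_eq_sub_posPart_sub,
      sub_add_cancel]
  sum_left b := by
    simp only [maximalCoupling, sum_add_distrib, sum_ite_eq', mem_univ, if_true]
    rw [← sum_div, ← sum_mul, mul_comm, sum_posPart_sub_eq_sum_negPart_sub hμν,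
      mul_sum_div_sum_of_nonneg fun a => negPart_nonneg (μ a - ν a), inf_eq_sub_posPart_sub]
    linarith [posPart_sub_negPart (μ b - ν b)]

theorem maximalCoupling_mul_ne (μ ν : α → ℝ) (w : α × α) :
    maximalCoupling μ ν w * (if w.1 ≠ w.2 then 1 else 0)
      = (μ w.1 - ν w.1)⁺ * (μ w.2 - ν w.2)⁻ / ∑ a, (μ a - ν a)⁺ := by
  obtain ⟨a, b⟩ := w
  by_cases hab : a = b
  · subst hab
    have hdisjoint : (μ a - ν a)⁺ * (μ a - ν a)⁻ = 0 := by
      rcases le_total (μ a - ν a) 0 with h | h <;> simp [h]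
    simp [hdisjoint]
  · simp [maximalCoupling, hab]

theorem sum_maximalCoupling_mul_ne (hμν : ∑ a, μ a = ∑ a, ν a) :
    ∑ w : α × α, maximalCoupling μ ν w * (if w.1 ≠ w.2 then 1 else 0)
      = (∑ a, |μ a - ν a|) / 2 := by
  have hexcess := sum_posPart_sub_eq_sum_negPart_sub hμν
  have habs : ∑ a, |μ a - ν a| = ∑ a, (μ a - ν a)⁺ + ∑ a, (μ a - ν a)⁻ := by
    simp only [← posPart_add_negPart, sum_add_distrib]
  simp only [maximalCoupling_mul_ne, ← sum_div]
  rw [Fintype.sum_prod_type' fun a b => (μ a - ν a)⁺ * (μ b - ν b)⁻, ← Fintype.sum_mul_sum,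
    ← hexcess, mul_self_div_self, habs, ← hexcess, add_self_div_two]

end MaximalCoupling

section Transportation

variable {V : Type*} [Fintype V]

/-- The values taken by a single coordinate of a configuration. -/
abbrev Spin : Type := ({-1, 1} : Finset ℝ)

theorem mem_Dset {σ τ : Conf V} {x : V} : x ∈ Dset σ τ ↔ σ x ≠ τ x := by
  simp only [Dset, mem_filter, mem_univ, true_and, ne_eq, Subtype.coe_inj]

theorem card_Dset (σ τ : Conf V) :
    ((Dset σ τ).card : ℝ) = ∑ x, if σ x ≠ τ x then (1 : ℝ) else 0 := by
  simp only [Dset, natCast_card_filter, ne_eq, Subtype.coe_inj]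

variable [DecidableEq V]

theorem rhoTM_le_of_isCoupling {μ ν : Conf V → ℝ} {γ : Conf V × Conf V → ℝ}
    (hγ : IsCoupling γ μ ν) :
    rhoTM μ ν ≤ ∑ w : Conf V × Conf V, γ w * ((Dset w.1 w.2).card : ℝ) := by
  refine csInf_le ⟨0, ?_⟩ ⟨γ, hγ.nonneg, hγ.sum_right, hγ.sum_left, rfl⟩
  rintro _ ⟨γ', hγ', -, -, rfl⟩
  exact sum_nonneg fun w _ => mul_nonneg (hγ' w) (Nat.cast_nonneg _)

theorem sum_prod_mul_card_Dset {γ : V → Spin × Spin → ℝ} (hγ : ∀ x, ∑ w, γ x w = 1) :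
    ∑ w : Conf V × Conf V, (∏ x, γ x (w.1 x, w.2 x)) * ((Dset w.1 w.2).card : ℝ)
      = ∑ x, ∑ w : Spin × Spin, γ x w * (if w.1 ≠ w.2 then 1 else 0) := by
  rw [← (Equiv.arrowProdEquivProdArrow V (fun _ => Spin) fun _ => Spin).sum_comp]
  simp only [Equiv.arrowProdEquivProdArrow_apply, Prod.mk.eta, card_Dset, mul_sum]
  rw [sum_comm]
  exact sum_congr rfl fun x _ => sum_prod_mul_apply γ x (fun y _ => hγ y)
    fun w : Spin × Spin => if w.1 ≠ w.2 then 1 else 0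

theorem rhoTM_prod_le {μ ν : V → Spin → ℝ} (hμ : ∀ x s, 0 ≤ μ x s) (hν : ∀ x s, 0 ≤ ν x s)
    (hμ1 : ∀ x, ∑ s, μ x s = 1) (hν1 : ∀ x, ∑ s, ν x s = 1) :
    rhoTM (fun σ : Conf V => ∏ x, μ x (σ x)) (fun σ => ∏ x, ν x (σ x))
      ≤ ∑ x, (∑ s, |μ x s - ν x s|) / 2 := by
  have hμν (x : V) : ∑ s, μ x s = ∑ s, ν x s := (hμ1 x).trans (hν1 x).symm
  have hγ (x : V) : IsCoupling (maximalCoupling (μ x) (ν x)) (μ x) (ν x) :=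
    isCoupling_maximalCoupling (hμ x) (hν x) (hμν x)
  refine (rhoTM_le_of_isCoupling (.pi hγ)).trans_eq ?_
  rw [sum_prod_mul_card_Dset fun x => (hγ x).sum_eq.trans (hμ1 x)]
  exact sum_congr rfl fun x _ => sum_maximalCoupling_mul_ne (hμν x)

end Transportation

section SpinLaw

theorem spin_eq_neg_one_or_one (s : Spin) : (s : ℝ) = -1 ∨ (s : ℝ) = 1 := by
  simpa only [mem_insert, mem_singleton] using s.2

theorem sum_spin {M : Type*} [AddCommMonoid M] (f : ℝ → M) :
    ∑ s : Spin, f s = f (-1) + f 1 := by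
  rw [sum_coe_sort, sum_pair (by norm_num)]

/-- The Gibbs law of a single spin in the external field `a`. -/
noncomputable def spinLaw (a : ℝ) (s : Spin) : ℝ :=
  exp (a * s) / (2 * cosh a)

theorem spinLaw_nonneg (a : ℝ) (s : Spin) : 0 ≤ spinLaw a s :=
  div_nonneg (exp_pos _).le (mul_pos two_pos (cosh_pos a)).le

theorem sum_exp_mul_spin (a : ℝ) : ∑ s : Spin, exp (a * s) = 2 * cosh a := by
  rw [sum_spin fun s => exp (a * s), cosh_eq, mul_neg_one, mul_one]
  ring

theorem sum_spinLaw (a : ℝ) : ∑ s : Spin, spinLaw a s = 1 := by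
  simp only [spinLaw, ← sum_div, sum_exp_mul_spin]
  exact div_self (mul_pos two_pos (cosh_pos a)).ne'

theorem spinLaw_eq (a : ℝ) (s : Spin) : spinLaw a s = (1 + s * tanh a) / 2 := by
  have hexp : exp (a * s) = cosh a + s * sinh a := by
    rcases spin_eq_neg_one_or_one s with hs | hs <;> rw [hs]
    · rw [mul_neg_one, ← cosh_sub_sinh]
      ring
    · rw [mul_one, one_mul, cosh_add_sinh]
  rw [spinLaw, hexp, tanh_eq_sinh_div_cosh]
  field_simp

theorem sum_abs_spinLaw_sub (a b : ℝ) :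
    ∑ s, |spinLaw a s - spinLaw b s| = |tanh a - tanh b| := by
  have hterm (s : Spin) : |spinLaw a s - spinLaw b s| = |tanh a - tanh b| / 2 := by
    have hs : |(s : ℝ)| = 1 := by rcases spin_eq_neg_one_or_one s with hs | hs <;> simp [hs]
    rw [spinLaw_eq, spinLaw_eq, ← sub_div, add_sub_add_left_eq_sub, ← mul_sub, abs_div, abs_mul,
      hs, one_mul, abs_two]
  simp only [hterm]
  rw [sum_spin fun _ => |tanh a - tanh b| / 2, add_halves]

theorem tanh_abs_mul_spin_sub (c : ℝ) (s t : Spin) :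
    tanh |c * ((s - t : ℝ) / 2)| = if s ≠ t then tanh |c| else 0 := by
  simp only [← Subtype.coe_ne_coe]
  rcases spin_eq_neg_one_or_one s with hs | hs <;>
    rcases spin_eq_neg_one_or_one t with ht | ht <;> simp only [hs, ht] <;> norm_num

end SpinLaw

section OneStep

variable {V : Type*} [Fintype V] (J : V → V → ℝ) (h q : V → ℝ) (β : ℝ)

/-- The field felt by the refreshed spin at `x` when the current configuration is `σ`. The current
configuration is the left argument of `J` in `H̃`, hence the transposed couplings `flip J`, which
agree with `J` in the symmetric case. -/
noncomputable def updateField (σ : Conf V) (x : V) : ℝ :=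
  β / 2 * (cavity (flip J) h σ x + q x * σ x)

theorem neg_mul_Htilde (σ τ : Conf V) :
    -β * Htilde J h q σ τ
      = β / 2 * ∑ x, h x * (σ x : ℝ) + ∑ x, updateField J h q β σ x * (τ x : ℝ) := by
  have hfield : ∑ x, updateField J h q β σ x * (τ x : ℝ)
      = β / 2 * (∑ x, ∑ y, J x y * (σ x : ℝ) * (τ y : ℝ) + ∑ x, h x * (τ x : ℝ)
        + ∑ x, q x * (σ x : ℝ) * (τ x : ℝ)) := by
    rw [sum_comm (f := fun x y => J x y * (σ x : ℝ) * (τ y : ℝ)), ← sum_add_distrib,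
      ← sum_add_distrib, mul_sum]
    refine sum_congr rfl fun x _ => ?_
    rw [updateField, cavity, ← sum_mul]
    simp only [flip]
    ring
  rw [hfield, Htilde]
  simp only [mul_add, sum_add_distrib]
  ring

theorem tanh_half_abs_updateField_sub_le (σ τ : Conf V) (x : V) :
    tanh (|updateField J h q β σ x - updateField J h q β τ x| / 2)
      ≤ (∑ y, if σ y ≠ τ y then tanh |β * J y x / 2| else 0)
        + if σ x ≠ τ x then tanh |β * q x / 2| else 0 := by
  have hsub : (updateField J h q β σ x - updateField J h q β τ x) / 2
      = (∑ y, β * J y x / 2 * ((σ y - τ y : ℝ) / 2)) + β * q x / 2 * ((σ x - τ x : ℝ) / 2) := by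
    have hsum : ∑ y, β * J y x / 2 * ((σ y - τ y : ℝ) / 2)
        = β / 4 * (∑ y, J y x * (σ y : ℝ) - ∑ y, J y x * (τ y : ℝ)) := by
      rw [← sum_sub_distrib, mul_sum]
      exact sum_congr rfl fun y _ => by ring
    rw [hsum]
    simp only [updateField, cavity, flip]
    ring
  simp only [← tanh_abs_mul_spin_sub]
  have hhalf : |updateField J h q β σ x - updateField J h q β τ x| / 2
      = |(updateField J h q β σ x - updateField J h q β τ x) / 2| := by
    rw [abs_div, abs_two]
  rw [hhalf, hsub]
  exact (tanh_abs_add_le _ _).trans (add_le_add_left (tanh_abs_sum_le _ _) _)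

variable [DecidableEq V]

theorem PSCA_eq_prod (σ : Conf V) :
    PSCA J h q β σ = fun τ => ∏ x, spinLaw (updateField J h q β σ x) (τ x) := by
  funext τ
  simp only [PSCA, wSCA, neg_mul_Htilde, exp_add, exp_sum, ← mul_sum]
  rw [mul_div_mul_left _ _ (exp_pos _).ne',
    ← Fintype.prod_sum fun x (s : Spin) => exp (updateField J h q β σ x * (s : ℝ))]
  simp only [sum_exp_mul_spin, spinLaw, prod_div_distrib]

theorem rhoTM_PSCA_le_sum_tanh (σ τ : Conf V) :
    rhoTM (PSCA J h q β σ) (PSCA J h q β τ)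
      ≤ ∑ x, tanh (|updateField J h q β σ x - updateField J h q β τ x| / 2) := by
  rw [PSCA_eq_prod, PSCA_eq_prod]
  refine (rhoTM_prod_le (fun _ => spinLaw_nonneg _) (fun _ => spinLaw_nonneg _)
    (fun _ => sum_spinLaw _) (fun _ => sum_spinLaw _)).trans (sum_le_sum fun x _ => ?_)
  rw [sum_abs_spinLaw_sub, div_le_iff₀' two_pos]
  exact abs_tanh_sub_tanh_le _ _

theorem rhoTM_PSCA_le_general (r : ℝ)
    (hr : ∀ x, tanh |β * q x / 2| + ∑ y, tanh |β * J x y / 2| ≤ r) (σ τ : Conf V) :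
    rhoTM (PSCA J h q β σ) (PSCA J h q β τ) ≤ r * ((Dset σ τ).card : ℝ) :=
  calc rhoTM (PSCA J h q β σ) (PSCA J h q β τ)
      ≤ ∑ x, ((∑ y, if σ y ≠ τ y then tanh |β * J y x / 2| else 0)
        + if σ x ≠ τ x then tanh |β * q x / 2| else 0) :=
        (rhoTM_PSCA_le_sum_tanh J h q β σ τ).trans
          (sum_le_sum fun x _ => tanh_half_abs_updateField_sub_le J h q β σ τ x)
    _ = ∑ y ∈ Dset σ τ, (tanh |β * q y / 2| + ∑ x, tanh |β * J y x / 2|) := by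
        simp only [← mem_Dset, sum_add_distrib, sum_ite_mem, univ_inter]
        rw [sum_comm, add_comm]
    _ ≤ ∑ _y ∈ Dset σ τ, r := sum_le_sum fun y _ => hr y
    _ = r * ((Dset σ τ).card : ℝ) := by rw [sum_const, nsmul_eq_mul, mul_comm]

end OneStep

/-- Theorem 2.1, contraction estimate: if
`r := max_x (tanh(βq_x/2) + Σ_y tanh(β|J_{x,y}|/2)) < 1`, then
`ρ_TM(P^SCA(σ,·), P^SCA(τ,·)) ≤ r |D_{σ,τ}|` for all `σ, τ`. -/
theorem rhoTM_PSCA_le {V : Type*} [Fintype V] [DecidableEq V] [Nonempty V]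
    (J : V → V → ℝ) (hJsym : ∀ x y, J x y = J y x) (hJdiag : ∀ x, J x x = 0)
    (h q : V → ℝ) (hq : ∀ x, 0 ≤ q x) (β : ℝ) (hβ : 0 ≤ β) (r : ℝ)
    (hr : r = Finset.univ.sup' Finset.univ_nonempty
      (fun x => Real.tanh (β * q x / 2) + ∑ y, Real.tanh (β * |J x y| / 2)))
    (hr1 : r < 1) :
    ∀ σ τ : Conf V,
      rhoTM (PSCA J h q β σ) (PSCA J h q β τ) ≤ r * ((Dset σ τ).card : ℝ) := by
  refine rhoTM_PSCA_le_general J h q β r fun x => ?_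
  simpa only [abs_div, abs_mul, abs_of_nonneg hβ, abs_of_nonneg (hq x), abs_two, hr] using
    le_sup' (fun x => tanh (β * q x / 2) + ∑ y, tanh (β * |J x y| / 2)) (mem_univ x)
end

section
/- (SCA flips more spins than Glauber at high temperature) If β ≥ 0 satisfies max_{x∈V} (β/2)( q_x + |h_x| + Σ_{y∈V} |J_{x,y}| ) ≤ log√|V|, then for every σ ∈ Ω, Σ_{x∈V} 1/(e^{β(h̃_x(σ)σ_x + q_x)} + 1) ≥ (1/|V|) Σ_{x∈V} 1/(e^{2β h̃_x(σ)σ_x} + 1); that is, the expected number of spin flips per update of the SCA is at least that of the Glauber dynamics. -/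
open Real Finset

/-!
The inequality already holds site by site. With `a = β h̃_x(σ) σ_x` and `b = β q_x`, the exponents
in the Glauber and SCA flip probabilities are `2a` and `a + b`, so passing from one to the other
raises the exponent by `b - a ≤ β (q_x + |h_x| + ∑_y |J_{x,y}|) ≤ log |V|`. Raising `t` by at most
`log n` shrinks `1 / (e^t + 1)` by a factor of at most `n`.
-/

theorem one_div_mul_one_div_exp_add_one_le {n s t : ℝ} (hn : 1 ≤ n) (hst : t ≤ log n + s) :
    1 / n * (1 / (exp s + 1)) ≤ 1 / (exp t + 1) := by
  have exp_le : exp t ≤ n * exp s :=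
    calc exp t ≤ exp (log n + s) := exp_le_exp.2 hst
      _ = n * exp s := by rw [exp_add, exp_log (by positivity)]
  have denom_le : exp t + 1 ≤ n * (exp s + 1) :=
    calc exp t + 1 ≤ n * exp s + n := add_le_add exp_le hn
      _ = n * (exp s + 1) := by ring
  rw [one_div_mul_one_div]
  exact one_div_le_one_div_of_le (by positivity) denom_le

theorem abs_coe_spin (s : ({-1, 1} : Finset ℝ)) : |(s : ℝ)| = 1 := by
  obtain hs | hs : (s : ℝ) = -1 ∨ (s : ℝ) = 1 := by simpa only [mem_insert, mem_singleton] using s.2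
  all_goals simp [hs]

section Cavity

variable {V : Type*} [Fintype V] (J : V → V → ℝ) (h : V → ℝ) (σ : Conf V)

theorem abs_cavity_le (x : V) : |cavity J h σ x| ≤ |h x| + ∑ y, |J x y| :=
  calc |cavity J h σ x|
      ≤ |∑ y, J x y * (σ y : ℝ)| + |h x| := abs_add_le _ _
    _ ≤ ∑ y, |J x y * (σ y : ℝ)| + |h x| := by gcongr; exact abs_sum_le_sum_abs _ _
    _ = |h x| + ∑ y, |J x y| := by simp only [abs_mul, abs_coe_spin, mul_one, add_comm]

theorem neg_cavity_mul_spin_le (x : V) :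
    -(cavity J h σ x * (σ x : ℝ)) ≤ |h x| + ∑ y, |J x y| :=
  calc -(cavity J h σ x * (σ x : ℝ))
      ≤ |cavity J h σ x * (σ x : ℝ)| := neg_le_abs _
    _ = |cavity J h σ x| := by rw [abs_mul, abs_coe_spin, mul_one]
    _ ≤ |h x| + ∑ y, |J x y| := abs_cavity_le J h σ x

theorem sca_exponent_le_add_glauber_exponent (q : V → ℝ) {β : ℝ} (hβ : 0 ≤ β) (x : V) :
    β * (cavity J h σ x * (σ x : ℝ) + q x)
      ≤ β * (q x + |h x| + ∑ y, |J x y|) + 2 * β * cavity J h σ x * (σ x : ℝ) := by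
  linarith [mul_le_mul_of_nonneg_left (neg_cavity_mul_spin_le J h σ x) hβ]

theorem sca_flips_ge_glauber_general [Nonempty V] (q : V → ℝ) {β : ℝ} (hβ : 0 ≤ β)
    (hhigh : ∀ x, β / 2 * (q x + |h x| + ∑ y, |J x y|) ≤ log (√(Fintype.card V))) :
    (1 / (Fintype.card V : ℝ)) * ∑ x, 1 / (exp (2 * β * cavity J h σ x * (σ x : ℝ)) + 1)
      ≤ ∑ x, 1 / (exp (β * (cavity J h σ x * (σ x : ℝ) + q x)) + 1) := by
  have one_le_card : (1 : ℝ) ≤ Fintype.card V := by exact_mod_cast Fintype.card_pos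
  rw [mul_sum]
  refine sum_le_sum fun x _ => one_div_mul_one_div_exp_add_one_le one_le_card ?_
  have field_le_log : β * (q x + |h x| + ∑ y, |J x y|) ≤ log (Fintype.card V) := by
    have half_le := hhigh x
    rw [log_sqrt (Nat.cast_nonneg _)] at half_le
    linarith
  exact (sca_exponent_le_add_glauber_exponent J h σ q hβ x).trans (by gcongr)

end Cavity

/-- SCA flips more spins than Glauber at high temperature: if
`max_x (β/2)(q_x + |h_x| + Σ_y |J_{x,y}|) ≤ log √|V|`, then the expected
number of spin flips per SCA update is at least that of the Glauber dynamics. -/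
theorem sca_flips_ge_glauber {V : Type*} [Fintype V] [DecidableEq V] [Nonempty V]
    (J : V → V → ℝ) (hJsym : ∀ x y, J x y = J y x) (hJdiag : ∀ x, J x x = 0)
    (h q : V → ℝ) (hq : ∀ x, 0 ≤ q x) (β : ℝ) (hβ : 0 ≤ β)
    (hhigh : ∀ x, β / 2 * (q x + |h x| + ∑ y, |J x y|)
      ≤ Real.log (Real.sqrt (Fintype.card V)))
    (σ : Conf V) :
    (1 / (Fintype.card V : ℝ))
        * ∑ x, 1 / (Real.exp (2 * β * cavity J h σ x * (σ x : ℝ)) + 1)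
      ≤ ∑ x, 1 / (Real.exp (β * (cavity J h σ x * (σ x : ℝ) + q x)) + 1) :=
  sca_flips_ge_glauber_general J h σ q hβ hhigh
end

section
/- (Sufficiency of the pinning condition for diagonal minimization) Let λ be the largest eigenvalue of the symmetric matrix [−J_{x,y}]_{x,y∈V}, let C ⊆ V be arbitrary, and suppose q_x ≥ Σ_{y∈V}|J_{x,y}| − (1/2)Σ_{y∈C}|J_{x,y}| for x ∈ C and q_x ≥ λ/2 for x ∉ C. Then min_{σ,τ∈Ω} H̃(σ,τ) = min_{σ∈Ω} H̃(σ,σ), and the set of configurations σ minimizing H̃(σ,σ) equals GS = argmin_σ H(σ). -/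
open Real Finset

/-!
Write `m = (σ + τ) / 2` and `d = (σ - τ) / 2`. Symmetry of `J` gives
`H̃(σ, τ) = H(m) - (1 / 2) ∑ q_x + P(d)`, where `H` is extended to real vectors and
`P(d) = (1 / 2) ⟨d, J d⟩ + ∑ q_x d_x²`.

The form `P` is nonnegative at `d ∈ {-1, 0, 1}^V`: write `d = a + b` with `a` supported on `C` and
`b` off `C`. Then `P(b) ≥ 0` by the Rayleigh bound for `-J`, while
`P(d) - P(b) = ∑_{x ∈ C} a_x ((J (a / 2 + b))_x + q_x a_x)` has nonnegative terms, since the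
condition on `C` guarantees `q_x ≥ |(J (a / 2 + b))_x|` whatever the signs of `a` and `b`.

Finally, `H` is concave in each coordinate when `J_{x,x} ≥ 0`, so `m ∈ [-1, 1]^V` can be rounded
one coordinate at a time to a spin configuration `η` with `H(η) ≤ H(m)`.
-/

open Matrix

section Rounding

variable {ι 𝕜 β : Type*} [Field 𝕜] [LinearOrder 𝕜] [IsStrictOrderedRing 𝕜] [LinearOrder β]

theorem min_le_of_quasiconcaveOn_Icc {f : 𝕜 → β} {a b t : 𝕜}
    (hf : QuasiconcaveOn 𝕜 (Set.Icc a b) f) (ht : t ∈ Set.Icc a b) :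
    min (f a) (f b) ≤ f t :=
  have hab : a ≤ b := ht.1.trans ht.2
  ((hf (min (f a) (f b))).ordConnected.out ⟨Set.left_mem_Icc.2 hab, min_le_left _ _⟩
    ⟨Set.right_mem_Icc.2 hab, min_le_right _ _⟩ ht).2

theorem exists_vertex_le_of_quasiconcaveOn [Finite ι] [DecidableEq ι] {f : (ι → 𝕜) → β}
    {a b u : ι → 𝕜}
    (hf : ∀ v ∈ Set.Icc a b, ∀ i,
      QuasiconcaveOn 𝕜 (Set.Icc (a i) (b i)) fun t => f (Function.update v i t))
    (hu : u ∈ Set.Icc a b) :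
    ∃ v, (∀ i, v i = a i ∨ v i = b i) ∧ f v ≤ f u := by
  have := Fintype.ofFinite ι
  suffices partialRounding : ∀ s : Finset ι,
      ∃ v ∈ Set.Icc a b, (∀ i ∈ s, v i = a i ∨ v i = b i) ∧ f v ≤ f u by
    obtain ⟨v, -, hv, hle⟩ := partialRounding Finset.univ
    exact ⟨v, fun i => hv i (Finset.mem_univ i), hle⟩
  intro s
  induction s using Finset.induction_on with
  | empty => exact ⟨u, hu, by simp, le_rfl⟩
  | insert i s _ ih =>
    obtain ⟨v, hv, hvs, hle⟩ := ih
    have hvi : v i ∈ Set.Icc (a i) (b i) := ⟨hv.1 i, hv.2 i⟩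
    obtain ⟨t, ht, hft⟩ : ∃ t, (t = a i ∨ t = b i) ∧ f (Function.update v i t) ≤ f v := by
      have hmin := min_le_of_quasiconcaveOn_Icc (hf v hv i) hvi
      rw [Function.update_eq_self, min_le_iff] at hmin
      exact hmin.elim (fun h => ⟨a i, .inl rfl, h⟩) fun h => ⟨b i, .inr rfl, h⟩
    have hti : t ∈ Set.Icc (a i) (b i) := by
      have hab : a i ≤ b i := hvi.1.trans hvi.2
      rcases ht with rfl | rfl
      exacts [Set.left_mem_Icc.2 hab, Set.right_mem_Icc.2 hab]
    refine ⟨Function.update v i t, ⟨?_, ?_⟩, fun j hj => ?_, hft.trans hle⟩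
    · exact le_update_iff.2 ⟨hti.1, fun j _ => hv.1 j⟩
    · exact update_le_iff.2 ⟨hti.2, fun j _ => hv.2 j⟩
    · rcases eq_or_ne j i with rfl | hji
      · simpa using ht
      · simpa [hji] using hvs j (Finset.mem_of_mem_insert_of_ne hj hji)

end Rounding

open scoped ComplexOrder in
theorem posSemidef_algebraMap_sub {n 𝕜 : Type*} [Fintype n] [DecidableEq n] [RCLike 𝕜]
    {A : Matrix n n 𝕜} (hA : A.IsHermitian) {c : ℝ} (hc : ∀ i, hA.eigenvalues i ≤ c) :
    (algebraMap ℝ (Matrix n n 𝕜) c - A).PosSemidef := by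
  open scoped MatrixOrder in
  refine Matrix.le_iff.1 (le_algebraMap_of_spectrum_le (fun r hr => ?_) hA)
  rw [hA.spectrum_real_eq_range_eigenvalues] at hr
  obtain ⟨i, rfl⟩ := hr
  exact hc i

theorem dotProduct_mulVec_comm_of_isSymm {n R : Type*} [Fintype n] [NonUnitalCommSemiring R]
    {A : Matrix n n R} (hA : A.IsSymm) (a b : n → R) : a ⬝ᵥ A *ᵥ b = b ⬝ᵥ A *ᵥ a := by
  rw [← dotProduct_transpose_mulVec, hA.eq]

theorem dotProduct_mulVec_add_sub {n R : Type*} [Fintype n] [NonUnitalCommRing R]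
    {A : Matrix n n R} (hA : A.IsSymm) (a b : n → R) :
    (a + b) ⬝ᵥ A *ᵥ (a - b) = a ⬝ᵥ A *ᵥ a - b ⬝ᵥ A *ᵥ b := by
  simp only [mulVec_sub, dotProduct_sub, add_dotProduct, dotProduct_mulVec_comm_of_isSymm hA b a]
  abel

theorem abs_mulVec_sub_smul_indicator_le {m n R : Type*} [Fintype n] [CommRing R] [LinearOrder R]
    [IsStrictOrderedRing R] (A : Matrix m n R) (C : Finset n) {c : R} (hc : c ≤ 1) {e : n → R}
    (he : ∀ y, |e y| ≤ 1) (x : m) :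
    |(A *ᵥ (e - c • (C : Set n).indicator e)) x| ≤ (∑ y, |A x y|) - c * ∑ y ∈ C, |A x y| := by
  classical
  have hentry : ∀ y, |(e - c • (C : Set n).indicator e) y| ≤ 1 - c * if y ∈ C then 1 else 0 := by
    intro y
    by_cases hy : y ∈ C
    · have hc' : 0 ≤ 1 - c := sub_nonneg.2 hc
      calc |(e - c • (C : Set n).indicator e) y| = |(1 - c) * e y| := by simp [hy, sub_mul]
        _ = (1 - c) * |e y| := by rw [abs_mul, abs_of_nonneg hc']
        _ ≤ 1 - c := mul_le_of_le_one_right hc' (he y)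
        _ = 1 - c * if y ∈ C then 1 else 0 := by simp [hy]
    · simpa [hy] using he y
  calc |(A *ᵥ (e - c • (C : Set n).indicator e)) x|
      ≤ ∑ y, |A x y| * |(e - c • (C : Set n).indicator e) y| := by
        simp only [← abs_mul]
        exact Finset.abs_sum_le_sum_abs _ _
    _ ≤ ∑ y, |A x y| * (1 - c * if y ∈ C then 1 else 0) := by
        gcongr with y
        exact hentry y
    _ = (∑ y, |A x y|) - c * ∑ y ∈ C, |A x y| := by
        simp [mul_sub, Finset.sum_sub_distrib, Finset.mul_sum, mul_comm]

section PinnedForm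

variable {V : Type*} [Fintype V] {A : Matrix V V ℝ} {q : V → ℝ}

/-- The quadratic form of `(1 / 2) A + diag q`. At half the difference of two spin configurations it
is the cost of leaving the diagonal in `H̃`. -/
noncomputable def pinnedForm (A : Matrix V V ℝ) (q v : V → ℝ) : ℝ :=
  (1 / 2) * (v ⬝ᵥ A *ᵥ v) + ∑ x, q x * v x ^ 2

theorem pinnedForm_sub_pinnedForm_sub (hA : A.IsSymm) (q e a : V → ℝ) :
    pinnedForm A q e - pinnedForm A q (e - a)
      = ∑ x, a x * ((A *ᵥ (e - (1 / 2 : ℝ) • a)) x + q x * (2 * e x - a x)) := by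
  have hquad : e ⬝ᵥ A *ᵥ e - (e - a) ⬝ᵥ A *ᵥ (e - a)
      = 2 * (a ⬝ᵥ A *ᵥ (e - (1 / 2 : ℝ) • a)) := by
    simp only [mulVec_sub, mulVec_smul, dotProduct_sub, sub_dotProduct, dotProduct_smul,
      smul_eq_mul, dotProduct_mulVec_comm_of_isSymm hA e a]
    ring
  have hpin : ∑ x, q x * e x ^ 2 - ∑ x, q x * (e - a) x ^ 2
      = ∑ x, a x * (q x * (2 * e x - a x)) := by
    rw [← Finset.sum_sub_distrib]
    exact Finset.sum_congr rfl fun x _ => by simp only [Pi.sub_apply]; ring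
  simp only [mul_add, Finset.sum_add_distrib]
  rw [← hpin, ← dotProduct]
  simp only [pinnedForm]
  linarith

theorem pinnedForm_sub_indicator_le (hA : A.IsSymm) {C : Finset V}
    (hC : ∀ x ∈ C, (∑ y, |A x y|) - (1 / 2) * ∑ y ∈ C, |A x y| ≤ q x)
    {e : V → ℝ} (he : ∀ x, |e x| ≤ 1) (heC : ∀ x ∈ C, e x ^ 2 = |e x|) :
    pinnedForm A q (e - (C : Set V).indicator e) ≤ pinnedForm A q e := by
  rw [← sub_nonneg, pinnedForm_sub_pinnedForm_sub hA]
  refine Finset.sum_nonneg fun x _ => ?_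
  by_cases hx : x ∈ C
  · set r := (A *ᵥ (e - (1 / 2 : ℝ) • (C : Set V).indicator e)) x
    have hr : |r| ≤ q x :=
      (abs_mulVec_sub_smul_indicator_le A C one_half_lt_one.le he x).trans (hC x hx)
    rw [Set.indicator_of_mem (Finset.mem_coe.2 hx)]
    calc 0 ≤ |e x| * (q x - |r|) := mul_nonneg (abs_nonneg _) (sub_nonneg.2 hr)
      _ = q x * e x ^ 2 - |e x * r| := by rw [heC x hx, abs_mul]; ring
      _ ≤ q x * e x ^ 2 + e x * r := by linarith [neg_abs_le (e x * r)]
      _ = e x * (r + q x * (2 * e x - e x)) := by ring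
  · simp [hx]

theorem pinnedForm_nonneg (hA : A.IsSymm) {C : Finset V}
    (hC : ∀ x ∈ C, (∑ y, |A x y|) - (1 / 2) * ∑ y ∈ C, |A x y| ≤ q x)
    (hCc : ∀ v : V → ℝ, (∀ x ∈ C, v x = 0) → 0 ≤ pinnedForm A q v)
    {e : V → ℝ} (he : ∀ x, |e x| ≤ 1) (heC : ∀ x ∈ C, e x ^ 2 = |e x|) :
    0 ≤ pinnedForm A q e :=
  (hCc _ fun x hx => by simp [hx]).trans (pinnedForm_sub_indicator_le hA hC he heC)

theorem pinnedForm_nonneg_of_eigenvalues_le [DecidableEq V] (hA : (-A).IsHermitian) {c : ℝ}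
    (hc : ∀ i, hA.eigenvalues i ≤ c) {v : V → ℝ} (hq : ∀ x, v x ≠ 0 → c / 2 ≤ q x) :
    0 ≤ pinnedForm A q v := by
  have hrayleigh : 0 ≤ c * (v ⬝ᵥ v) + v ⬝ᵥ A *ᵥ v := by
    simpa [add_mulVec, Algebra.algebraMap_eq_smul_one, smul_mulVec, dotProduct_add]
      using (posSemidef_algebraMap_sub hA hc).dotProduct_mulVec_nonneg v
  have hpin : c / 2 * (v ⬝ᵥ v) ≤ ∑ x, q x * v x ^ 2 := by
    rw [dotProduct, Finset.mul_sum]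
    refine Finset.sum_le_sum fun x _ => ?_
    by_cases hx : v x = 0
    · simp [hx]
    · rw [← sq]
      exact mul_le_mul_of_nonneg_right (hq x hx) (sq_nonneg _)
  rw [pinnedForm]
  linarith

end PinnedForm

section IsingEnergy

variable {V : Type*} [Fintype V]

/-- The Ising Hamiltonian extended from `{-1, 1}^V` to real vectors. -/
noncomputable def isingEnergy (A : Matrix V V ℝ) (h u : V → ℝ) : ℝ :=
  -(1 / 2) * (u ⬝ᵥ A *ᵥ u) - h ⬝ᵥ u

variable [DecidableEq V]

theorem isingEnergy_update (A : Matrix V V ℝ) (h u : V → ℝ) (x : V) (t : ℝ) :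
    isingEnergy A h (Function.update u x t) = isingEnergy A h u
      - (t - u x) * ((1 / 2) * ((A *ᵥ u) x + (u ᵥ* A) x) + h x)
      - (1 / 2) * A x x * (t - u x) ^ 2 := by
  have hupdate : Function.update u x t = u + (t - u x) • Pi.single x 1 := by
    ext y
    rcases eq_or_ne y x with rfl | hy <;> simp [*]
  have hvecMul : (u ᵥ* A) x = u ⬝ᵥ A.col x := rfl
  rw [hupdate, hvecMul]
  simp only [isingEnergy, mulVec_add, mulVec_smul, dotProduct_add, add_dotProduct,
    dotProduct_smul, smul_dotProduct, smul_eq_mul, single_one_dotProduct, dotProduct_mulVec u,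
    dotProduct_single_one, mulVec_single_one, col_apply]
  ring

theorem concaveOn_isingEnergy_update {A : Matrix V V ℝ} {x : V} (hA : 0 ≤ A x x)
    (h u : V → ℝ) {s : Set ℝ} (hs : Convex ℝ s) :
    ConcaveOn ℝ s fun t => isingEnergy A h (Function.update u x t) := by
  refine ⟨hs, fun t₁ _ t₂ _ p₁ p₂ hp₁ hp₂ hp => ?_⟩
  obtain rfl : p₂ = 1 - p₁ := by linarith
  have hgap : 0 ≤ (1 / 2) * A x x * (p₁ * (1 - p₁)) * (t₁ - t₂) ^ 2 := by positivity
  simp only [isingEnergy_update, smul_eq_mul]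
  linarith

end IsingEnergy

section Spins

variable {V : Type*}

/-- A spin configuration viewed as a real vector. -/
def spinVec (σ : Conf V) : V → ℝ := fun x => σ x

theorem spinVec_eq_neg_one_or_one (σ : Conf V) (x : V) : spinVec σ x = -1 ∨ spinVec σ x = 1 := by
  simpa only [Finset.mem_insert, Finset.mem_singleton, spinVec] using (σ x).2

theorem exists_spinVec_eq {v : V → ℝ} (hv : ∀ x, v x = -1 ∨ v x = 1) :
    ∃ σ : Conf V, spinVec σ = v :=
  ⟨fun x => ⟨v x, by simpa using hv x⟩, rfl⟩

theorem half_add_spinVec_mem_Icc (σ τ : Conf V) :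
    (1 / 2 : ℝ) • (spinVec σ + spinVec τ) ∈ Set.Icc (-1 : V → ℝ) 1 := by
  refine ⟨fun x => ?_, fun x => ?_⟩ <;>
    rcases spinVec_eq_neg_one_or_one σ x with hσ | hσ <;>
    rcases spinVec_eq_neg_one_or_one τ x with hτ | hτ <;> norm_num [hσ, hτ]

theorem abs_half_sub_spinVec_le_one (σ τ : Conf V) (x : V) :
    |((1 / 2 : ℝ) • (spinVec σ - spinVec τ)) x| ≤ 1 := by
  rcases spinVec_eq_neg_one_or_one σ x with hσ | hσ <;>
    rcases spinVec_eq_neg_one_or_one τ x with hτ | hτ <;> norm_num [hσ, hτ]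

theorem sq_half_sub_spinVec_eq_abs (σ τ : Conf V) (x : V) :
    ((1 / 2 : ℝ) • (spinVec σ - spinVec τ)) x ^ 2
      = |((1 / 2 : ℝ) • (spinVec σ - spinVec τ)) x| := by
  rcases spinVec_eq_neg_one_or_one σ x with hσ | hσ <;>
    rcases spinVec_eq_neg_one_or_one τ x with hτ | hτ <;> norm_num [hσ, hτ]

variable [Fintype V]

theorem Hamil_eq_isingEnergy (J : V → V → ℝ) (h : V → ℝ) (σ : Conf V) :
    Hamil J h σ = isingEnergy (of J) h (spinVec σ) := by
  simp only [Hamil, isingEnergy, spinVec, dotProduct, mulVec, of_apply, Finset.mul_sum,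
    mul_assoc, mul_left_comm]

theorem Htilde_eq_isingEnergy_add_pinnedForm {J : V → V → ℝ} (hJ : (of J).IsSymm)
    (h q : V → ℝ) (σ τ : Conf V) :
    Htilde J h q σ τ = isingEnergy (of J) h ((1 / 2 : ℝ) • (spinVec σ + spinVec τ))
      - (1 / 2) * ∑ x, q x + pinnedForm (of J) q ((1 / 2 : ℝ) • (spinVec σ - spinVec τ)) := by
  set m := (1 / 2 : ℝ) • (spinVec σ + spinVec τ) with hm
  set d := (1 / 2 : ℝ) • (spinVec σ - spinVec τ) with hd
  have hσ : spinVec σ = m + d := by rw [hm, hd]; module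
  have hτ : spinVec τ = m - d := by rw [hm, hd]; module
  have hcoupling : ∑ x, ∑ y, J x y * (σ x : ℝ) * (τ y : ℝ)
      = m ⬝ᵥ of J *ᵥ m - d ⬝ᵥ of J *ᵥ d := by
    rw [← dotProduct_mulVec_add_sub hJ, ← hσ, ← hτ]
    simp only [spinVec, dotProduct, mulVec, of_apply, Finset.mul_sum, mul_assoc, mul_left_comm]
  have hfield : ∑ x, h x * ((σ x : ℝ) + (τ x : ℝ)) = 2 * (h ⬝ᵥ m) := by
    rw [dotProduct, Finset.mul_sum]
    refine Finset.sum_congr rfl fun x _ => ?_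
    simp only [hm, spinVec, Pi.smul_apply, Pi.add_apply, smul_eq_mul]
    ring
  have hpin : ∑ x, q x * (σ x : ℝ) * (τ x : ℝ) = (∑ x, q x) - 2 * ∑ x, q x * d x ^ 2 := by
    rw [Finset.mul_sum, ← Finset.sum_sub_distrib]
    refine Finset.sum_congr rfl fun x _ => ?_
    change q x * spinVec σ x * spinVec τ x
      = q x - 2 * (q x * (1 / 2 * (spinVec σ x - spinVec τ x)) ^ 2)
    rcases spinVec_eq_neg_one_or_one σ x with hσx | hσx <;>
      rcases spinVec_eq_neg_one_or_one τ x with hτx | hτx <;> rw [hσx, hτx] <;> ring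
  rw [Htilde, hcoupling, hfield, hpin, isingEnergy, pinnedForm]
  ring

theorem Htilde_self (J : V → V → ℝ) (h q : V → ℝ) (σ : Conf V) :
    Htilde J h q σ σ = Hamil J h σ - (1 / 2) * ∑ x, q x := by
  have hpin : ∑ x, q x * (σ x : ℝ) * (σ x : ℝ) = ∑ x, q x :=
    Finset.sum_congr rfl fun x _ => by
      rcases spinVec_eq_neg_one_or_one σ x with hx | hx <;> rw [spinVec] at hx <;> simp [hx]
  have hfield : ∑ x, h x * ((σ x : ℝ) + (σ x : ℝ)) = 2 * ∑ x, h x * (σ x : ℝ) := by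
    simp only [← two_mul, mul_left_comm _ (2 : ℝ), ← Finset.mul_sum]
  rw [Htilde, Hamil, hpin, hfield]
  ring

theorem exists_Hamil_le_isingEnergy {J : V → V → ℝ} (hJ : ∀ x, 0 ≤ J x x) (h : V → ℝ)
    {u : V → ℝ} (hu : u ∈ Set.Icc (-1 : V → ℝ) 1) :
    ∃ η : Conf V, Hamil J h η ≤ isingEnergy (of J) h u := by
  classical
  obtain ⟨v, hv, hle⟩ := exists_vertex_le_of_quasiconcaveOn (𝕜 := ℝ)
    (f := isingEnergy (of J) h)
    (fun w _ x => (concaveOn_isingEnergy_update (hJ x) h w (convex_Icc _ _)).quasiconcaveOn) hu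
  obtain ⟨η, rfl⟩ := exists_spinVec_eq hv
  exact ⟨η, (Hamil_eq_isingEnergy J h η).trans_le hle⟩

end Spins

theorem pinning_condition_diag_min_general {V : Type*} [Fintype V]
    (J : V → V → ℝ) (hJsym : ∀ x y, J x y = J y x) (hJdiag : ∀ x, 0 ≤ J x x)
    (h q : V → ℝ) (C : Finset V)
    (hqC : ∀ x ∈ C, (∑ y, |J x y|) - (1 / 2) * ∑ y ∈ C, |J x y| ≤ q x)
    (hqnotC : ∀ v : V → ℝ, (∀ x ∈ C, v x = 0) → 0 ≤ pinnedForm (of J) q v) :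
    (∀ σ τ : Conf V, ∃ η : Conf V, Htilde J h q η η ≤ Htilde J h q σ τ) ∧
    (∀ σ : Conf V,
      (∀ τ : Conf V, Htilde J h q σ σ ≤ Htilde J h q τ τ)
        ↔ (∀ τ : Conf V, Hamil J h σ ≤ Hamil J h τ)) := by
  have hJ : (of J).IsSymm := Matrix.ext fun x y => hJsym y x
  refine ⟨fun σ τ => ?_, fun σ => by simp only [Htilde_self, sub_le_sub_iff_right]⟩
  obtain ⟨η, hη⟩ := exists_Hamil_le_isingEnergy hJdiag h (half_add_spinVec_mem_Icc σ τ)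
  have hpinned := pinnedForm_nonneg hJ hqC hqnotC (abs_half_sub_spinVec_le_one σ τ)
    fun x _ => sq_half_sub_spinVec_eq_abs σ τ x
  refine ⟨η, ?_⟩
  rw [Htilde_self, Htilde_eq_isingEnergy_add_pinnedForm hJ]
  linarith

/-- sufficiency of the pinning condition for diagonal
minimization: under the pinning condition with set `C` and largest eigenvalue
`lam` of `[-J]`, the extended Hamiltonian attains its minimum on the diagonal,
and the diagonal minimizers are exactly the ground states of `H`. -/
theorem pinning_condition_diag_min {V : Type*} [Fintype V] [DecidableEq V] [Nonempty V]
    (J : V → V → ℝ) (hJsym : ∀ x y, J x y = J y x) (hJdiag : ∀ x, J x x = 0)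
    (h q : V → ℝ) (hq : ∀ x, 0 ≤ q x) (lam : ℝ)
    (hherm : (Matrix.of fun x y => -J x y).IsHermitian)
    (hlam : lam = ⨆ x, hherm.eigenvalues x)
    (C : Finset V)
    (hqC : ∀ x ∈ C, (∑ y, |J x y|) - (1/2) * ∑ y ∈ C, |J x y| ≤ q x)
    (hqnotC : ∀ x ∉ C, lam / 2 ≤ q x) :
    (∀ σ τ : Conf V, ∃ η : Conf V, Htilde J h q η η ≤ Htilde J h q σ τ) ∧
    (∀ σ : Conf V,
      (∀ τ : Conf V, Htilde J h q σ σ ≤ Htilde J h q τ τ)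
        ↔ (∀ τ : Conf V, Hamil J h σ ≤ Hamil J h τ)) :=
  pinning_condition_diag_min_general J hJsym (fun x => (hJdiag x).ge) h q C hqC fun _ hv =>
    pinnedForm_nonneg_of_eigenvalues_le (A := of J) hherm
      (fun i => (le_ciSup (Set.finite_range _).bddAbove i).trans_eq hlam.symm)
      fun x hx => hqnotC x fun hxC => hx (hv x hxC)
end

section
/- (Summability of successive equilibrium differences) Suppose the pinning parameters satisfy min_{σ,τ∈Ω} H̃(σ,τ) = min_{σ∈Ω} H̃(σ,σ) with {σ : H̃(σ,σ) minimal} = GS. Then for any non-decreasing sequence β_t with β_t → ∞, Σ_{t=1}^∞ ||π^SCA_{β_{t+1},q} − π^SCA_{β_t,q}||_TV < ∞. -/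
open Real Finset

open scoped Classical in
/-- The set of ground states `GS = argmin H`. -/
noncomputable def GS {V : Type*} [Fintype V] [DecidableEq V]
    (J : V → V → ℝ) (h : V → ℝ) : Finset (Conf V) :=
  Finset.univ.filter fun σ => ∀ τ : Conf V, Hamil J h σ ≤ Hamil J h τ

/-- The uniform distribution `π^G_∞` over the ground states. -/
noncomputable def piGinf {V : Type*} [Fintype V] [DecidableEq V]
    (J : V → V → ℝ) (h : V → ℝ) (σ : Conf V) : ℝ :=
  (if σ ∈ GS J h then 1 else 0) / ((GS J h).card : ℝ)

/-!
Rewrite `π^SCA_{β,q}(σ)` as the probability of the event `{σ} × Ω` under the Gibbs distribution of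
`H̃` on `Ω × Ω`. After subtracting the ground energy, every Boltzmann weight is non-increasing in
`β`, and the partition function is moreover at least `1`. A Gibbs probability is therefore a
bounded non-increasing function times a bounded non-decreasing one, so it has bounded variation on
`[β₀, ∞)`, and its increments along a non-decreasing sequence are absolutely summable.
-/

section BoundedVariation

variable {α : Type*} [LinearOrder α] {s : Set α}

theorem boundedVariationOn_of_antitoneOn {f : α → ℝ} {C : ℝ} (hf : AntitoneOn f s)
    (hC : ∀ x ∈ s, |f x| ≤ C) : BoundedVariationOn f s := by
  have hneg : BoundedVariationOn (-f) s :=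
    hf.neg.boundedVariationOn fun x hx => by simpa using hC x hx
  simpa [Function.comp_def] using (LipschitzWith.id (α := ℝ)).neg.comp_boundedVariationOn hneg

theorem boundedVariationOn_div_of_antitoneOn {f g : α → ℝ} {δ : ℝ} (hf : BoundedVariationOn f s)
    (hg : AntitoneOn g s) (hδ : 0 < δ) (hδg : ∀ x ∈ s, δ ≤ g x) :
    BoundedVariationOn (fun x => f x / g x) s := by
  have hg_pos : ∀ x ∈ s, 0 < g x := fun x hx => hδ.trans_le (hδg x hx)
  have hinv_mono : MonotoneOn (fun x => (g x)⁻¹) s := fun x hx y hy hxy =>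
    inv_anti₀ (hg_pos y hy) (hg hx hy hxy)
  have hinv_le : ∀ x ∈ s, |(g x)⁻¹| ≤ δ⁻¹ := fun x hx => by
    rw [abs_of_pos (inv_pos.2 (hg_pos x hx))]
    exact inv_anti₀ hδ (hδg x hx)
  simpa only [div_eq_mul_inv] using
    hf.fun_mul (hinv_mono.boundedVariationOn hinv_le)

theorem summable_dist_succ_of_boundedVariationOn {E : Type*} [PseudoMetricSpace E] {f : α → E}
    (hf : BoundedVariationOn f s) {u : ℕ → α} (hu : Monotone u) (hus : ∀ n, u n ∈ s) :
    Summable fun n => dist (f (u (n + 1))) (f (u n)) := by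
  simp only [dist_edist]
  exact ENNReal.summable_toReal <| ne_top_of_le_ne_top hf <|
    ENNReal.tsum_le_of_sum_range_le fun _ => eVariationOn.sum_le hu hus

end BoundedVariation

section Gibbs

variable {ι : Type*}

theorem antitone_sum_exp_neg_mul {E : ι → ℝ} {s : Finset ι} (hE : ∀ i ∈ s, 0 ≤ E i) :
    Antitone fun β : ℝ => ∑ i ∈ s, exp (-β * E i) := fun _ _ hβ =>
  sum_le_sum fun i hi => exp_le_exp.2 (mul_le_mul_of_nonneg_right (neg_le_neg hβ) (hE i hi))

variable [Fintype ι]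

/-- The probability of the event `s` under the Gibbs distribution with energy `E` at inverse
temperature `β` on a finite state space. Taking events rather than single states makes marginals of
Gibbs distributions instances of this definition. -/
noncomputable def gibbsProb (E : ι → ℝ) (β : ℝ) (s : Finset ι) : ℝ :=
  (∑ i ∈ s, exp (-β * E i)) / ∑ i, exp (-β * E i)

theorem gibbsProb_sub_const (E : ι → ℝ) (c β : ℝ) (s : Finset ι) :
    gibbsProb (fun i => E i - c) β s = gibbsProb E β s := by
  have hshift : ∀ i, exp (-β * (E i - c)) = exp (-β * E i) * exp (β * c) := fun i => by
    rw [← exp_add]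
    ring_nf
  simp only [gibbsProb, hshift, ← sum_mul]
  exact mul_div_mul_right _ _ (exp_ne_zero _)

theorem boundedVariationOn_gibbsProb_Ici [Nonempty ι] (E : ι → ℝ) (s : Finset ι) (β₀ : ℝ) :
    BoundedVariationOn (fun β => gibbsProb E β s) (Set.Ici β₀) := by
  obtain ⟨i₀, hi₀⟩ := Finite.exists_min E
  have hanti (t : Finset ι) : Antitone fun β : ℝ => ∑ i ∈ t, exp (-β * (E i - E i₀)) :=
    antitone_sum_exp_neg_mul fun i _ => sub_nonneg.2 (hi₀ i)
  have hbound : ∀ β ∈ Set.Ici β₀, |∑ i ∈ s, exp (-β * (E i - E i₀))| ≤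
      ∑ i ∈ s, exp (-β₀ * (E i - E i₀)) := fun β hβ => by
    rw [abs_of_nonneg (sum_nonneg fun i _ => (exp_pos _).le)]
    exact hanti s hβ
  have hpartition (β : ℝ) : 1 ≤ ∑ i, exp (-β * (E i - E i₀)) := by
    simpa using single_le_sum (f := fun i => exp (-β * (E i - E i₀)))
      (fun i _ => (exp_pos _).le) (mem_univ i₀)
  simp only [← gibbsProb_sub_const E (E i₀)]
  exact boundedVariationOn_div_of_antitoneOn
    (boundedVariationOn_of_antitoneOn ((hanti s).antitoneOn _) hbound)
    ((hanti univ).antitoneOn _) one_pos fun β _ => hpartition β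

end Gibbs

section SCA

variable {V : Type*} [Fintype V] [DecidableEq V] (J : V → V → ℝ) (h q : V → ℝ)

theorem piSCA_eq_gibbsProb (β : ℝ) (σ : Conf V) :
    piSCA J h q β σ =
      gibbsProb (fun p : Conf V × Conf V => Htilde J h q p.1 p.2) β ({σ} ×ˢ univ) := by
  simp only [piSCA, wSCA, gibbsProb, sum_product, sum_singleton, Fintype.sum_prod_type]

theorem boundedVariationOn_piSCA_Ici (σ : Conf V) (β₀ : ℝ) :
    BoundedVariationOn (fun β => piSCA J h q β σ) (Set.Ici β₀) := by
  simpa only [piSCA_eq_gibbsProb] using boundedVariationOn_gibbsProb_Ici _ _ β₀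

theorem summable_tvDist_piSCA_succ_general {β : ℕ → ℝ} (hβ : Monotone β) :
    Summable fun t => tvDist (piSCA J h q (β (t + 1))) (piSCA J h q (β t)) :=
  Summable.mul_left _ <| summable_sum fun σ _ =>
    summable_dist_succ_of_boundedVariationOn (boundedVariationOn_piSCA_Ici J h q σ (β 0)) hβ
      fun t => hβ t.zero_le

end SCA

/-- summability of successive equilibrium differences: under the
pinning condition, for any non-decreasing `β_t → ∞`,
`Σ_t ‖π^SCA_{β_{t+1},q} − π^SCA_{β_t,q}‖_TV < ∞`. -/
theorem summable_tvDist_piSCA_succ {V : Type*} [Fintype V] [DecidableEq V]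
    (J : V → V → ℝ) (hJsym : ∀ x y, J x y = J y x) (hJdiag : ∀ x, J x x = 0)
    (h q : V → ℝ) (hq : ∀ x, 0 ≤ q x)
    (hmin : ∀ σ τ : Conf V, ∃ η : Conf V, Htilde J h q η η ≤ Htilde J h q σ τ)
    (hGS : ∀ σ : Conf V,
      (∀ τ η : Conf V, Htilde J h q σ σ ≤ Htilde J h q τ η) ↔ σ ∈ GS J h)
    (βseq : ℕ → ℝ) (hmono : Monotone βseq)
    (hβtop : Filter.Tendsto βseq Filter.atTop Filter.atTop) :
    Summable (fun t : ℕ =>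
      tvDist (piSCA J h q (βseq (t + 1))) (piSCA J h q (βseq t))) := by
  exact summable_tvDist_piSCA_succ_general J h q hmono
end
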